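/- arXiv:2011.05584 — 2 statements merged into one kernel-verified Lean document; each statement's English description precedes it below -/
import Mathlib

section
/- If (K_j)_{j=1}^m is a finite collection of pairwise disjoint compact subsets of C, then φ(⋃_{j=1}^m K_j) = Σ_{j=1}^m φ(K_j). -/
open MeasureTheory Matrix Set Filter Topology
open scoped ENNReal

noncomputable section

/-- The space `C` of continuous functions on `[0,1]` vanishing at `0`,
with the supremum metric (inherited from `C([0,1], ℝ)`). -/
abbrev Cz : Type := {f : C(Set.Icc (0:ℝ) 1, ℝ) // f ⟨0, ⟨le_refl 0, zero_le_one⟩⟩ = 0}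

/-- The projection `π_n : C → ℝ^n`, `x ↦ (x(t_1), …, x(t_n))`. -/
def proj (t : ℕ → ℝ) (ht : ∀ k, t k ∈ Set.Ioc (0:ℝ) 1) (n : ℕ) (x : Cz) : Fin n → ℝ :=
  fun i => (x : C(Set.Icc (0:ℝ) 1, ℝ)) ⟨t i, Set.Ioc_subset_Icc_self (ht i)⟩

/-- The covariance matrix `M_n` with entries `min (t j) (t r)`. -/
def covM (t : ℕ → ℝ) (n : ℕ) : Matrix (Fin n) (Fin n) ℝ :=
  Matrix.of fun j r => min (t (j : ℕ)) (t (r : ℕ))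

/-- The centered Gaussian measure on `ℝ^n` with (positive definite) covariance matrix `M`:
the measure with density `u ↦ ((2π)^n det M)^{-1/2} exp (-⟨u, M⁻¹ u⟩ / 2)` w.r.t. Lebesgue
measure. -/
def gauss (n : ℕ) (M : Matrix (Fin n) (Fin n) ℝ) : Measure (Fin n → ℝ) :=
  volume.withDensity fun u =>
    ENNReal.ofReal ((((2 * Real.pi) ^ n * M.det) ^ (-(1:ℝ)/2 : ℝ)) *
      Real.exp (-(u ⬝ᵥ M⁻¹.mulVec u) / 2))

/-- `φ(K) = inf_{n ≥ 1} ν_n (π_n(K))`. -/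
def phi (t : ℕ → ℝ) (ht : ∀ k, t k ∈ Set.Ioc (0:ℝ) 1) (K : Set Cz) : ℝ≥0∞ :=
  ⨅ n : ℕ, gauss (n+1) (covM t (n+1)) (proj t ht (n+1) '' K)

/-- `μ(A) = sup {φ(K) : K ⊆ A, K compact}`. -/
def mu (t : ℕ → ℝ) (ht : ∀ k, t k ∈ Set.Ioc (0:ℝ) 1) (A : Set Cz) : ℝ≥0∞ :=
  ⨆ (K : Set Cz) (_ : K ⊆ A) (_ : IsCompact K), phi t ht K

/-!
A nonsingular centered Gaussian measure with covariance `M` is the image of the standard one under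
`√M`, and linear images of Gaussian measures are determined by their mean and covariance. Hence
discarding the last coordinate sends `ν_{n+1}` to `ν_n`, so `ν_n(π_n(K))` decreases to `φ(K)` for
every compact `K`. The projections separate the points of `C` because the `t_k` are dense; if `K`
and `L` are disjoint and compact, then the decreasing closed sets `{(x, y) ∈ K × L : π_n x = π_n y}`
have empty intersection and hence are eventually empty, so `π_n(K)` and `π_n(L)` are eventually
disjoint. Additivity of each `ν_n` therefore passes to the limit.
-/

section ProjectiveSystem

variable {X : Type*} [TopologicalSpace X] {Y : ℕ → Type*} [∀ n, TopologicalSpace (Y n)]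
  [∀ n, T2Space (Y n)] {p : ∀ n, X → Y n}

lemma eventually_disjoint_image (hp : ∀ n, Continuous (p n))
    (hanti : Antitone fun n => {z : X × X | p n z.1 = p n z.2})
    (hsep : ∀ x y, (∀ n, p n x = p n y) → x = y) {K L : Set X} (hK : IsCompact K)
    (hL : IsCompact L) (hKL : Disjoint K L) :
    ∀ᶠ n in atTop, Disjoint (p n '' K) (p n '' L) := by
  have hclosed : ∀ n, IsClosed {z : X × X | p n z.1 = p n z.2} := fun n =>
    isClosed_eq ((hp n).comp continuous_fst) ((hp n).comp continuous_snd)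
  have hempty : (K ×ˢ L) ∩ ⋂ n, {z : X × X | p n z.1 = p n z.2} = ∅ := by
    rw [eq_empty_iff_forall_notMem]
    rintro ⟨x, y⟩ ⟨⟨hx, hy⟩, hxy⟩
    exact hKL.ne_of_mem hx hy (hsep x y (mem_iInter.1 hxy))
  obtain ⟨N, hN⟩ :=
    (hK.prod hL).elim_directed_family_closed _ hclosed hempty hanti.directed_ge
  filter_upwards [eventually_ge_atTop N] with n hn
  rw [disjoint_left]
  rintro _ ⟨x, hx, rfl⟩ ⟨y, hy, hxy⟩
  exact (eq_empty_iff_forall_notMem.1 hN) (x, y) ⟨⟨hx, hy⟩, hanti hn hxy.symm⟩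

variable [∀ n, MeasurableSpace (Y n)] [∀ n, OpensMeasurableSpace (Y n)] {μ : ∀ n, Measure (Y n)}
  {r : ∀ n, Y (n + 1) → Y n}

lemma antitone_measure_image (hp : ∀ n, Continuous (p n)) (hr : ∀ n x, r n (p (n + 1) x) = p n x)
    (hμ : ∀ n, MeasurePreserving (r n) (μ (n + 1)) (μ n)) {K : Set X} (hK : IsCompact K) :
    Antitone fun n => μ n (p n '' K) :=
  antitone_nat_of_succ_le fun n => by
    rw [← (hμ n).measure_preimage (hK.image (hp n)).measurableSet.nullMeasurableSet]
    refine measure_mono ?_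
    rintro _ ⟨x, hx, rfl⟩
    exact ⟨x, hx, (hr n x).symm⟩

theorem iInf_measure_image_iUnion {ι : Type*} [Fintype ι] (hp : ∀ n, Continuous (p n))
    (hsep : ∀ x y, (∀ n, p n x = p n y) → x = y)
    (hr : ∀ n x, r n (p (n + 1) x) = p n x)
    (hμ : ∀ n, MeasurePreserving (r n) (μ (n + 1)) (μ n))
    {K : ι → Set X} (hK : ∀ i, IsCompact (K i)) (hdisj : Pairwise fun i j => Disjoint (K i) (K j)) :
    ⨅ n, μ n (p n '' ⋃ i, K i) = ∑ i, ⨅ n, μ n (p n '' K i) := by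
  have htendsto {L : Set X} (hL : IsCompact L) :
      Tendsto (fun n => μ n (p n '' L)) atTop (𝓝 (⨅ n, μ n (p n '' L))) :=
    tendsto_atTop_iInf (antitone_measure_image hp hr hμ hL)
  have hanti : Antitone fun n => {z : X × X | p n z.1 = p n z.2} :=
    antitone_nat_of_succ_le fun n z hz => by
      simpa only [mem_ofPred_eq, hr] using congrArg (r n) hz
  have hevent : ∀ᶠ n in atTop, ∀ i j, i ≠ j → Disjoint (p n '' K i) (p n '' K j) := by
    simp only [eventually_all]
    exact fun i j hij =>
      eventually_disjoint_image hp hanti hsep (hK i) (hK j) (hdisj hij)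
  refine tendsto_nhds_unique (htendsto (isCompact_iUnion hK))
    ((tendsto_finsetSum Finset.univ fun i _ => htendsto (hK i)).congr' ?_)
  filter_upwards [hevent] with n hn
  rw [image_iUnion, measure_iUnion (fun i j => hn i j)
    (fun i => ((hK i).image (hp n)).measurableSet), tsum_fintype]

end ProjectiveSystem

section MinMatrix

variable {ι R : Type*} [CommRing R] [LinearOrder R] {t : ι → R} {s : Finset ι}

-- `min (t i) (t j) - c = (t a - c) + (min (t i) (t j) - t a)`, and the last term vanishes
-- when `i` or `j` is the minimizer `a`.
lemma sum_insert_sum_insert_mul_min_sub [DecidableEq ι] {a : ι} (ha : a ∉ s)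
    (hmin : ∀ i ∈ s, t a ≤ t i) (x : ι → R) (c : R) :
    ∑ i ∈ insert a s, ∑ j ∈ insert a s, x i * x j * (min (t i) (t j) - c) =
      (t a - c) * (∑ i ∈ insert a s, x i) ^ 2 +
        ∑ i ∈ s, ∑ j ∈ s, x i * x j * (min (t i) (t j) - t a) := by
  have hrow : ∑ j ∈ insert a s, x a * x j * (min (t a) (t j) - t a) = 0 :=
    Finset.sum_eq_zero fun j hj => by
      rcases Finset.mem_insert.1 hj with rfl | hj
      · simp
      · simp [min_eq_left (hmin j hj)]
  have hcol : ∀ i ∈ s, x i * x a * (min (t i) (t a) - t a) = 0 := fun i hi => by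
    simp [min_eq_right (hmin i hi)]
  have hextend : ∑ i ∈ s, ∑ j ∈ s, x i * x j * (min (t i) (t j) - t a) =
      ∑ i ∈ insert a s, ∑ j ∈ insert a s, x i * x j * (min (t i) (t j) - t a) := by
    rw [Finset.sum_insert ha, hrow, zero_add]
    refine Finset.sum_congr rfl fun i hi => ?_
    rw [Finset.sum_insert ha, hcol i hi, zero_add]
  rw [hextend, sq, Finset.sum_mul_sum, Finset.mul_sum, ← Finset.sum_add_distrib]
  simp only [Finset.mul_sum, ← Finset.sum_add_distrib]
  congr! 2
  ring

variable [IsStrictOrderedRing R]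

lemma sum_sum_mul_min_sub_pos (ht : InjOn t s) {c : R} (hc : ∀ i ∈ s, c < t i) {x : ι → R}
    (hx : ∃ i ∈ s, x i ≠ 0) :
    0 < ∑ i ∈ s, ∑ j ∈ s, x i * x j * (min (t i) (t j) - c) := by
  classical
  induction s using Finset.induction_on_min_value t generalizing c with
  | empty => simp at hx
  | insert a s ha hmin ih =>
    have hlt : ∀ i ∈ s, t a < t i := fun i hi =>
      (hmin i hi).lt_of_ne fun h => ha (ht (by simp) (by simp [hi]) h ▸ hi)
    have hca : 0 < t a - c := sub_pos.2 (hc a (Finset.mem_insert_self a s))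
    rw [sum_insert_sum_insert_mul_min_sub ha hmin]
    by_cases hxs : ∃ i ∈ s, x i ≠ 0
    · have hrest := ih (ht.mono (by simp)) hlt hxs
      positivity
    · push Not at hxs
      have hxa : x a ≠ 0 := by
        rw [Finset.exists_mem_insert] at hx
        exact hx.resolve_right fun ⟨i, hi, hxi⟩ => hxi (hxs i hi)
      have hzero : ∑ i ∈ s, ∑ j ∈ s, x i * x j * (min (t i) (t j) - t a) = 0 :=
        Finset.sum_eq_zero fun i hi => by simp [hxs i hi]
      rw [hzero, Finset.sum_insert ha, Finset.sum_eq_zero hxs, add_zero, add_zero]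
      positivity

lemma posDef_min {ι : Type*} [Finite ι] {t : ι → ℝ} (ht : Function.Injective t)
    (hpos : ∀ i, 0 < t i) : (Matrix.of fun i j => min (t i) (t j)).PosDef := by
  cases nonempty_fintype ι
  refine .of_dotProduct_mulVec_pos (by ext i j; simp [min_comm]) fun x hx => ?_
  have hsum := sum_sum_mul_min_sub_pos (s := Finset.univ) ht.injOn (fun i _ => hpos i)
    (by simpa using Function.ne_iff.1 hx)
  refine hsum.trans_eq ?_
  simp only [dotProduct, mulVec, of_apply, Finset.mul_sum, star_trivial, sub_zero]
  congr! 2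
  ring

end MinMatrix

section ProductDensity

variable {ι : Type*} {E : ι → Type*} {mE : ∀ i, MeasurableSpace (E i)}
    {μ : ∀ i, Measure (E i)} [∀ i, SigmaFinite (μ i)] {f : ∀ i, E i → ℝ≥0∞}

lemma lmarginal_prod_eq_prod_lintegral [DecidableEq ι] (hf : ∀ i, Measurable (f i)) (s : Finset ι) :
    (∫⋯∫⁻_s, (fun x => ∏ i ∈ s, f i (x i)) ∂μ) = fun _ => ∏ i ∈ s, ∫⁻ x, f i x ∂μ i := by
  induction s using Finset.induction_on with
  | empty => simp
  | insert a s ha ih =>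
    have hinner (x : ∀ i, E i) :
        ∫⁻ y, ∏ i ∈ insert a s, f i (Function.update x a y i) ∂μ a =
          (∫⁻ y, f a y ∂μ a) * ∏ i ∈ s, f i (x i) := by
      rw [← lintegral_mul_const _ (hf a)]
      refine lintegral_congr fun y => ?_
      rw [Finset.prod_insert ha, Function.update_self]
      congr 1
      refine Finset.prod_congr rfl fun i hi => ?_
      rw [Function.update_of_ne (ne_of_mem_of_not_mem hi ha)]
    rw [lmarginal_insert' _ (by fun_prop) ha]
    simp only [hinner]
    ext x
    rw [lmarginal, lintegral_const_mul _ (by fun_prop), Finset.prod_insert ha]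
    exact congrArg _ (congrFun ih x)

variable [Fintype ι]

lemma lintegral_pi_prod (hf : ∀ i, Measurable (f i)) :
    ∫⁻ x, ∏ i, f i (x i) ∂(Measure.pi μ) = ∏ i, ∫⁻ x, f i x ∂(μ i) := by
  classical
  cases isEmpty_or_nonempty (∀ i, E i) with
  | inl h =>
    obtain ⟨i, hi⟩ := isEmpty_pi.1 h
    rw [lintegral_of_isEmpty, Finset.prod_eq_zero (Finset.mem_univ i) (lintegral_of_isEmpty _ _)]
  | inr h =>
    obtain ⟨x⟩ := h
    rw [lintegral_eq_lmarginal_univ x, lmarginal_prod_eq_prod_lintegral hf]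

lemma pi_withDensity (hf : ∀ i, Measurable (f i)) [∀ i, SigmaFinite ((μ i).withDensity (f i))] :
    Measure.pi (fun i => (μ i).withDensity (f i)) =
      (Measure.pi μ).withDensity fun x => ∏ i, f i (x i) := by
  refine Measure.pi_eq fun s hs => ?_
  rw [withDensity_apply _ (MeasurableSet.univ_pi hs), Measure.restrict_pi_pi,
    lintegral_pi_prod hf]
  exact Finset.prod_congr rfl fun i _ => (withDensity_apply _ (hs i)).symm

end ProductDensity

section Gaussian

open ProbabilityTheory WithLp

variable {n : ℕ} {M : Matrix (Fin n) (Fin n) ℝ}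

/-- The density of `gauss n M` with respect to Lebesgue measure, kept real-valued so that its
transformation under linear maps is an identity between real numbers. -/
def gaussianDensity (M : Matrix (Fin n) (Fin n) ℝ) (u : Fin n → ℝ) : ℝ :=
  ((2 * Real.pi) ^ n * M.det) ^ (-(1:ℝ)/2 : ℝ) * Real.exp (-(u ⬝ᵥ M⁻¹.mulVec u) / 2)

lemma gauss_eq_withDensity (M : Matrix (Fin n) (Fin n) ℝ) :
    gauss n M = volume.withDensity fun u => ENNReal.ofReal (gaussianDensity M u) := rfl

@[fun_prop]
lemma measurable_gaussianDensity (M : Matrix (Fin n) (Fin n) ℝ) :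
    Measurable (gaussianDensity M) := by
  unfold gaussianDensity dotProduct mulVec dotProduct
  fun_prop

lemma mulVec_dotProduct_inv_mulVec_mulVec {ι R : Type*} [Fintype ι] [DecidableEq ι] [CommRing R]
    {A : Matrix ι ι R} (hA : IsUnit A.det) (M : Matrix ι ι R) (u : ι → R) :
    (A *ᵥ u) ⬝ᵥ (A * M * Aᵀ)⁻¹ *ᵥ (A *ᵥ u) = u ⬝ᵥ M⁻¹ *ᵥ u := by
  have hconj : Aᵀ * ((A * M * Aᵀ)⁻¹ * A) = M⁻¹ := by
    rw [Matrix.mul_inv_rev, Matrix.mul_inv_rev, ← Matrix.mul_assoc, ← Matrix.mul_assoc,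
      mul_nonsing_inv _ (by rwa [det_transpose]), one_mul, Matrix.mul_assoc,
      nonsing_inv_mul _ hA, mul_one]
  rw [← hconj, ← mulVec_mulVec, ← mulVec_mulVec, dotProduct_mulVec u, vecMul_transpose]

lemma abs_det_mul_gaussianDensity_mulVec {A : Matrix (Fin n) (Fin n) ℝ} (hA : A.det ≠ 0)
    (hM : 0 ≤ M.det) (u : Fin n → ℝ) :
    |A.det| * gaussianDensity (A * M * Aᵀ) (A *ᵥ u) = gaussianDensity M u := by
  have hdet : (2 * Real.pi) ^ n * (A * M * Aᵀ).det = |A.det| ^ 2 * ((2 * Real.pi) ^ n * M.det) := by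
    rw [det_mul, det_mul, det_transpose, sq_abs]
    ring
  have hroot : |A.det| * (|A.det| ^ 2) ^ (-(1:ℝ)/2 : ℝ) = 1 := by
    rw [← Real.rpow_natCast_mul (abs_nonneg _)]
    norm_num [Real.rpow_neg_one, hA]
  rw [gaussianDensity, gaussianDensity, mulVec_dotProduct_inv_mulVec_mulVec hA.isUnit, hdet,
    Real.mul_rpow (by positivity) (by positivity), ← mul_assoc, ← mul_assoc, hroot, one_mul]

lemma map_mulVec_gauss {A : Matrix (Fin n) (Fin n) ℝ} (hA : A.det ≠ 0) (hM : 0 ≤ M.det) :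
    (gauss n M).map (A *ᵥ ·) = gauss n (A * M * Aᵀ) := by
  have hmeas : Measurable (A *ᵥ ·) := by fun_prop
  have hvol : (volume : Measure (Fin n → ℝ)) =
      ENNReal.ofReal |A.det| • volume.map (A *ᵥ ·) := by
    rw [show (A *ᵥ ·) = ⇑(toLin' A) from rfl,
      Real.map_matrix_volume_pi_eq_smul_volume_pi hA, smul_smul,
      ← ENNReal.ofReal_mul (abs_nonneg _), ← abs_mul, mul_inv_cancel₀ hA, abs_one,
      ENNReal.ofReal_one, one_smul]
  ext s hs
  rw [Measure.map_apply hmeas hs, gauss_eq_withDensity, gauss_eq_withDensity,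
    withDensity_apply _ hs, withDensity_apply _ (hmeas hs)]
  conv_rhs => rw [hvol]
  rw [Measure.restrict_smul, lintegral_smul_measure, setLIntegral_map hs (by fun_prop) hmeas,
    smul_eq_mul, ← lintegral_const_mul _ (by fun_prop)]
  simp_rw [← ENNReal.ofReal_mul (abs_nonneg _), abs_det_mul_gaussianDensity_mulVec hA hM]

lemma gaussianDensity_one (u : Fin n → ℝ) :
    gaussianDensity 1 u = ∏ i, gaussianPDFReal 0 1 (u i) := by
  have hconst : ((2 * Real.pi) ^ n * (1 : Matrix (Fin n) (Fin n) ℝ).det) ^ (-(1:ℝ)/2 : ℝ) =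
      (√(2 * Real.pi))⁻¹ ^ n := by
    rw [det_one, mul_one, ← Real.rpow_pow_comm (by positivity), Real.sqrt_eq_rpow,
      ← Real.rpow_neg (by positivity), neg_div]
  have hquad : -(u ⬝ᵥ (1 : Matrix (Fin n) (Fin n) ℝ)⁻¹ *ᵥ u) / 2 = ∑ i, -u i ^ 2 / 2 := by
    simp [dotProduct, ← Finset.sum_div, sq]
  simp only [gaussianPDFReal, Finset.prod_mul_distrib, ← Real.exp_sum, Finset.prod_const,
    Finset.card_univ, Fintype.card_fin, NNReal.coe_one, mul_one, sub_zero]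
  rw [gaussianDensity, hconst, hquad]

lemma gauss_one : gauss n 1 = Measure.pi fun _ => gaussianReal 0 1 := by
  have hreal : gaussianReal 0 1 = volume.withDensity (gaussianPDF 0 1) :=
    gaussianReal_of_var_ne_zero 0 one_ne_zero
  have : SigmaFinite ((volume : Measure ℝ).withDensity (gaussianPDF 0 1)) :=
    hreal ▸ inferInstance
  rw [hreal, pi_withDensity fun _ => measurable_gaussianPDF 0 1, gauss_eq_withDensity, volume_pi]
  simp_rw [gaussianDensity_one, gaussianPDF,
    ENNReal.ofReal_prod_of_nonneg fun _ _ => gaussianPDFReal_nonneg _ _ _]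

open scoped MatrixOrder in
lemma gauss_eq_map_multivariateGaussian (hM : M.PosDef) :
    gauss n M = (multivariateGaussian 0 M).map ofLp := by
  have hsqrt : CFC.sqrt M * 1 * (CFC.sqrt M)ᵀ = M := by
    rw [mul_one, ← conjTranspose_eq_transpose_of_trivial,
      (CFC.sqrt_nonneg M).posSemidef.isHermitian, CFC.sqrt_mul_sqrt_self M hM.posSemidef.nonneg]
  have hdet : (CFC.sqrt M).det ≠ 0 := fun h => hM.det_pos.ne' (by
    rw [← hsqrt, det_mul, det_mul, h, zero_mul, zero_mul])
  nth_rw 1 [← hsqrt]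
  rw [← map_mulVec_gauss hdet (by simp), gauss_one, multivariateGaussian, ← map_pi_eq_stdGaussian,
    Measure.map_map (by fun_prop) (by fun_prop), Measure.map_map (by fun_prop) (by fun_prop)]
  congr 1
  ext u
  simp

lemma map_toEuclideanLin_multivariateGaussian {ι κ : Type*} [Fintype ι] [DecidableEq ι] [Fintype κ]
    [DecidableEq κ] (μ : EuclideanSpace ℝ ι) {S : Matrix ι ι ℝ} (hS : S.PosSemidef)
    (B : Matrix κ ι ℝ) :
    (multivariateGaussian μ S).map (toEuclideanLin B) =
      multivariateGaussian (toEuclideanLin B μ) (B * S * Bᵀ) := by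
  set L := (toEuclideanLin B).toContinuousLinearMap
  have hBSB : (B * S * Bᵀ).PosSemidef := by
    simpa only [conjTranspose_eq_transpose_of_trivial] using hS.mul_mul_conjTranspose_same B
  have hadj (u : EuclideanSpace ℝ κ) : (L.adjoint u).ofLp = u.ofLp ᵥ* B := by
    change ((toEuclideanLin B).adjoint u).ofLp = _
    rw [← toEuclideanLin_conjTranspose_eq_adjoint, ofLp_toLpLin,
      conjTranspose_eq_transpose_of_trivial, toLin'_apply, mulVec_transpose]
  change (multivariateGaussian μ S).map L = multivariateGaussian (L μ) _
  apply IsGaussian.ext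
  · simp only [id_eq, integral_id_multivariateGaussian]
    rw [L.integral_id_map IsGaussian.integrable_id, integral_id_multivariateGaussian]
  · ext u v
    rw [covarianceBilin_map IsGaussian.memLp_two_id, covarianceBilin_multivariateGaussian hS,
      covarianceBilin_multivariateGaussian hBSB, hadj, hadj,
      ← mulVec_mulVec, ← mulVec_mulVec, mulVec_transpose, dotProduct_mulVec u.ofLp]

lemma measurePreserving_comp_gauss {m : ℕ} {f : Fin m → Fin n} (hf : Function.Injective f)
    (hM : M.PosDef) : MeasurePreserving (· ∘ f) (gauss n M) (gauss m (M.submatrix f f)) := by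
  refine ⟨by fun_prop, ?_⟩
  set B : Matrix (Fin m) (Fin n) ℝ := (1 : Matrix (Fin n) (Fin n) ℝ).submatrix f id
  have hB (u : Fin n → ℝ) : B *ᵥ u = u ∘ f := by
    ext i
    simp [B, mulVec, dotProduct, one_apply]
  have hsub : B * M * Bᵀ = M.submatrix f f := by
    ext i j
    simp [B, mul_apply, one_apply]
  rw [gauss_eq_map_multivariateGaussian hM, gauss_eq_map_multivariateGaussian (hM.submatrix hf),
    ← hsub, ← map_zero (toEuclideanLin B),
    ← map_toEuclideanLin_multivariateGaussian _ hM.posSemidef,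
    Measure.map_map (by fun_prop) (by fun_prop), Measure.map_map (by fun_prop) (by fun_prop)]
  congr 1
  ext u : 1
  exact (hB _).symm

end Gaussian

section Wiener

variable {t : ℕ → ℝ}

lemma covM_posDef (htinj : Function.Injective t) (htpos : ∀ k, 0 < t k) (n : ℕ) :
    (covM t n).PosDef :=
  posDef_min (htinj.comp Fin.val_injective) fun i => htpos i

lemma measurePreserving_comp_castSucc_gauss_covM (htinj : Function.Injective t)
    (htpos : ∀ k, 0 < t k) (n : ℕ) :
    MeasurePreserving (· ∘ Fin.castSucc) (gauss (n + 1) (covM t (n + 1))) (gauss n (covM t n)) :=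
  measurePreserving_comp_gauss (Fin.castSucc_injective n) (covM_posDef htinj htpos (n + 1))

variable (ht : ∀ k, t k ∈ Ioc (0 : ℝ) 1)

lemma continuous_proj (n : ℕ) : Continuous (proj t ht n) :=
  continuous_pi fun _ => (continuous_eval_const _).comp continuous_subtype_val

lemma eq_of_forall_proj_succ_eq (htdense : Icc (0 : ℝ) 1 ⊆ closure (range t)) {x y : Cz}
    (hxy : ∀ n, proj t ht (n + 1) x = proj t ht (n + 1) y) : x = y := by
  have hdense : DenseRange fun k => (⟨t k, Ioc_subset_Icc_self (ht k)⟩ : Icc (0 : ℝ) 1) := by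
    intro s
    rw [closure_subtype, ← range_comp]
    exact htdense s.2
  exact Subtype.ext (DFunLike.coe_injective (hdense.equalizer x.1.continuous y.1.continuous
    (funext fun k => congrFun (hxy k) (Fin.last k))))

end Wiener

/-- `φ` is finitely additive on pairwise disjoint compact sets. -/
theorem stmt5 (t : ℕ → ℝ) (ht : ∀ k, t k ∈ Set.Ioc (0:ℝ) 1)
    (htinj : Function.Injective t)
    (htdense : Set.Icc (0:ℝ) 1 ⊆ closure (Set.range t))
    (m : ℕ) (K : Fin m → Set Cz) (hK : ∀ j, IsCompact (K j))
    (hdisj : ∀ i j, i ≠ j → Disjoint (K i) (K j)) :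
    phi t ht (⋃ j, K j) = ∑ j, phi t ht (K j) := by
  have htpos : ∀ k, 0 < t k := fun k => (ht k).1
  exact iInf_measure_image_iUnion (r := fun _ => (· ∘ Fin.castSucc))
    (fun n => continuous_proj ht (n + 1))
    (fun _ _ => eq_of_forall_proj_succ_eq ht htdense)
    (fun _ _ => rfl)
    (fun n => measurePreserving_comp_castSucc_gauss_covM htinj htpos (n + 1))
    hK hdisj

end
end

section
/- If A and B are Borel subsets of C with A ⊆ B, then μ(B \ A) = μ(B) − μ(A). -/
open MeasureTheory Matrix Set Filter Topology
open scoped ENNReal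

noncomputable section

instance : MeasurableSpace Cz := borel Cz
instance : BorelSpace Cz := ⟨rfl⟩

/-!
The kernel `min s r` is the inner product of `1_(0,s]` and `1_(0,r]` in `L²(ℝ)`, and these
indicators are linearly independent for distinct positive endpoints. Applying Gram–Schmidt to the
`1_(0,t_k]` gives coefficients of a lower triangular system that turns i.i.d. standard normal
variables into a random sequence whose first `n` terms have law `ν_n` for every `n`, without an
extension theorem. Since `(t_k)` is dense, `x ↦ (x(t_k))_k` is a continuous injection of the
Polish space `C` into `ℝ^ℕ`, so the law of that sequence pulls back to a finite Borel measure on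
`C`. A compact set is the decreasing intersection of the cylinders over its finite-dimensional
projections, whence this measure agrees with `φ` on compact sets and, being inner regular, with
`μ` on Borel sets.
-/

open ProbabilityTheory InnerProductSpace

section LinearImageOfStandardGaussian

lemma map_withDensity_comp {α β : Type*} [MeasurableSpace α] [MeasurableSpace β] (μ : Measure α)
    {f : α → β} (hf : Measurable f) {g : β → ℝ≥0∞} (hg : Measurable g) :
    (μ.withDensity (g ∘ f)).map f = (μ.map f).withDensity g := by
  ext s hs
  rw [Measure.map_apply hf hs, withDensity_apply _ (hf hs), withDensity_apply _ hs,
    setLIntegral_map hs hg hf]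
  rfl

lemma pi_withDensity_ofReal {ι : Type*} [Fintype ι] {X : ι → Type*} [∀ i, MeasurableSpace (X i)]
    (μ : ∀ i, Measure (X i)) [∀ i, SigmaFinite (μ i)] {f : ∀ i, X i → ℝ}
    (hf : ∀ i, Integrable (f i) (μ i)) (hf_nonneg : ∀ i x, 0 ≤ f i x) :
    Measure.pi (fun i ↦ (μ i).withDensity fun x ↦ ENNReal.ofReal (f i x)) =
      (Measure.pi μ).withDensity fun x ↦ ENNReal.ofReal (∏ i, f i (x i)) := by
  have (i : ι) : IsFiniteMeasure ((μ i).withDensity fun x ↦ ENNReal.ofReal (f i x)) :=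
    isFiniteMeasure_withDensity_ofReal (hf i).2
  refine Measure.pi_eq fun s hs ↦ ?_
  have hprod_nonneg (x : ∀ i, X i) : 0 ≤ ∏ i, f i (x i) :=
    Finset.prod_nonneg fun i _ ↦ hf_nonneg i (x i)
  rw [withDensity_apply _ (MeasurableSet.univ_pi hs), Measure.restrict_pi_pi,
    ← ofReal_integral_eq_lintegral_ofReal (.fintype_prod_dep fun i ↦ (hf i).restrict)
      (ae_of_all _ hprod_nonneg),
    integral_fintype_prod_eq_prod,
    ENNReal.ofReal_prod_of_nonneg fun i _ ↦ integral_nonneg (hf_nonneg i)]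
  refine Finset.prod_congr rfl fun i _ ↦ ?_
  rw [withDensity_apply _ (hs i),
    ofReal_integral_eq_lintegral_ofReal (hf i).restrict (ae_of_all _ (hf_nonneg i))]

lemma pi_gaussianReal_zero_one_eq_withDensity (ι : Type*) [Fintype ι] :
    Measure.pi (fun _ : ι ↦ gaussianReal 0 1) =
      volume.withDensity fun x : ι → ℝ ↦ ENNReal.ofReal (∏ i, gaussianPDFReal 0 1 (x i)) := by
  simp_rw [gaussianReal_of_var_ne_zero 0 one_ne_zero, gaussianPDF_def]
  exact pi_withDensity_ofReal _ (fun _ ↦ integrable_gaussianPDFReal 0 1)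
    fun _ ↦ gaussianPDFReal_nonneg 0 1

lemma prod_gaussianPDFReal_zero_one {ι : Type*} [Fintype ι] (x : ι → ℝ) :
    ∏ i, gaussianPDFReal 0 1 (x i) =
      ((2 * Real.pi) ^ Fintype.card ι) ^ (-(1 : ℝ) / 2) * Real.exp (-(x ⬝ᵥ x) / 2) := by
  have hconst : (√(2 * Real.pi))⁻¹ = (2 * Real.pi) ^ (-(1 : ℝ) / 2) := by
    rw [neg_div, Real.rpow_neg Real.two_pi_pos.le, Real.sqrt_eq_rpow]
  simp only [gaussianPDFReal, NNReal.coe_one, mul_one, sub_zero]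
  rw [Finset.prod_mul_distrib, ← Real.exp_sum, Finset.prod_const, Finset.card_univ, hconst,
    Real.rpow_pow_comm Real.two_pi_pos.le, ← Finset.sum_div, Finset.sum_neg_distrib]
  simp only [dotProduct, sq]

lemma mulVec_dotProduct_inv_mul_transpose_mulVec {ι R : Type*} [Fintype ι] [DecidableEq ι]
    [CommRing R] {L : Matrix ι ι R} (hL : IsUnit L.det) (x : ι → R) :
    (L *ᵥ x) ⬝ᵥ ((L * Lᵀ)⁻¹ *ᵥ (L *ᵥ x)) = x ⬝ᵥ x := by
  have hLt : IsUnit Lᵀ.det := by rwa [det_transpose]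
  rw [mulVec_mulVec, Matrix.mul_inv_rev, mul_assoc, nonsing_inv_mul _ hL, mul_one,
    dotProduct_mulVec, ← vecMul_transpose, vecMul_vecMul, mul_nonsing_inv _ hLt, vecMul_one]

lemma map_toLin'_withDensity_volume {ι : Type*} [Fintype ι] [DecidableEq ι] {L : Matrix ι ι ℝ}
    (hL : L.det ≠ 0) {g : (ι → ℝ) → ℝ≥0∞} (hg : Measurable g) :
    (volume.withDensity ((ENNReal.ofReal |L.det| • g) ∘ toLin' L)).map (toLin' L) =
      volume.withDensity g := by
  have hmeas : Measurable (toLin' L) :=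
    (LinearMap.continuous_of_finiteDimensional (toLin' L)).measurable
  have hdet : ENNReal.ofReal |L.det| * ENNReal.ofReal |L.det⁻¹| = 1 := by
    rw [← ENNReal.ofReal_mul (abs_nonneg _), ← abs_mul, mul_inv_cancel₀ hL, abs_one,
      ENNReal.ofReal_one]
  rw [map_withDensity_comp volume hmeas (hg.const_smul _),
    Real.map_matrix_volume_pi_eq_smul_volume_pi hL, withDensity_smul_measure,
    withDensity_smul _ hg, smul_smul, mul_comm, hdet, one_smul]

lemma map_toLin'_pi_gaussianReal_zero_one {n : ℕ} {L : Matrix (Fin n) (Fin n) ℝ}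
    (hL : L.det ≠ 0) :
    (Measure.pi fun _ : Fin n ↦ gaussianReal 0 1).map (toLin' L) = gauss n (L * Lᵀ) := by
  have hnormalization : |L.det| * ((2 * Real.pi) ^ n * (L * Lᵀ).det) ^ (-(1 : ℝ) / 2) =
      ((2 * Real.pi) ^ n) ^ (-(1 : ℝ) / 2) := by
    have hdet : ((L * Lᵀ).det) ^ (-(1 : ℝ) / 2) = |L.det|⁻¹ := by
      rw [det_mul, det_transpose, neg_div, Real.rpow_neg (mul_self_nonneg _),
        ← Real.sqrt_eq_rpow, Real.sqrt_mul_self_eq_abs]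
    rw [Real.mul_rpow (by positivity) (by rw [det_mul, det_transpose]; exact mul_self_nonneg _),
      hdet, mul_left_comm, mul_inv_cancel₀ (abs_ne_zero.2 hL), mul_one]
  rw [gauss, ← map_toLin'_withDensity_volume hL (by fun_prop),
    pi_gaussianReal_zero_one_eq_withDensity]
  congr 2 with x
  rw [Function.comp_apply, Pi.smul_apply, smul_eq_mul, toLin'_apply,
    ← ENNReal.ofReal_mul (abs_nonneg _), prod_gaussianPDFReal_zero_one, Fintype.card_fin,
    mulVec_dotProduct_inv_mul_transpose_mulVec hL.isUnit, ← mul_assoc, hnormalization]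

end LinearImageOfStandardGaussian

section GramCholesky

lemma inner_eq_sum_inner_mul_inner_of_mem_span {𝕜 E ι : Type*} [RCLike 𝕜]
    [SeminormedAddCommGroup E] [InnerProductSpace 𝕜 E] {e : ι → E} (he : Orthonormal 𝕜 e)
    {s : Finset ι} {x : E} (hx : x ∈ Submodule.span 𝕜 (e '' s)) (y : E) :
    inner 𝕜 x y = ∑ j ∈ s, inner 𝕜 x (e j) * inner 𝕜 (e j) y := by
  classical
  induction hx using Submodule.span_induction with
  | mem x hx =>
    obtain ⟨i, hi, rfl⟩ := hx
    simp [orthonormal_iff_ite.1 he, Finset.mem_coe.1 hi]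
  | zero => simp
  | add x x' _ _ hx hx' => simp [inner_add_left, hx, hx', add_mul, Finset.sum_add_distrib]
  | smul c x _ hx => simp [inner_smul_left, hx, Finset.mul_sum, mul_assoc]

variable {E : Type*} [NormedAddCommGroup E] [InnerProductSpace ℝ E]

/-- The coordinates of a sequence of vectors in its Gram–Schmidt orthonormalization. For a linearly
independent sequence, the leading `n × n` block is the Cholesky factor of the Gram matrix of the
first `n` vectors. -/
def gramCholesky (f : ℕ → E) (i j : ℕ) : ℝ :=
  inner ℝ (gramSchmidtNormed ℝ f j) (f i)

/-- The leading `n × n` block of `gramCholesky`. -/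
def gramCholeskyMatrix (f : ℕ → E) (n : ℕ) : Matrix (Fin n) (Fin n) ℝ :=
  Matrix.of fun i j ↦ gramCholesky f i j

lemma gramCholesky_eq_zero_of_lt (f : ℕ → E) {i j : ℕ} (hij : i < j) :
    gramCholesky f i j = 0 := by
  simp [gramCholesky, gramSchmidtNormed, real_inner_smul_left, gramSchmidt_inv_triangular ℝ f hij]

lemma gramCholeskyMatrix_mul_transpose {f : ℕ → E} (hf : LinearIndependent ℝ f) (n : ℕ) :
    gramCholeskyMatrix f n * (gramCholeskyMatrix f n)ᵀ = gram ℝ fun i : Fin n ↦ f i := by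
  ext i k
  have hmem : f i ∈ Submodule.span ℝ (gramSchmidtNormed ℝ f '' Finset.range n) := by
    rw [span_gramSchmidtNormed]
    refine Submodule.span_mono (image_mono fun j hj ↦ ?_) (mem_span_gramSchmidt ℝ f le_rfl)
    exact Finset.mem_coe.2 (Finset.mem_range.2 (lt_of_le_of_lt hj i.2))
  rw [gram_apply,
    inner_eq_sum_inner_mul_inner_of_mem_span (gramSchmidtNormed_orthonormal hf) hmem,
    ← Fin.sum_univ_eq_sum_range
      (fun j ↦ inner ℝ (f i) (gramSchmidtNormed ℝ f j) * inner ℝ (gramSchmidtNormed ℝ f j) (f k))]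
  simp only [mul_apply, transpose_apply, gramCholeskyMatrix, of_apply, gramCholesky,
    real_inner_comm]

lemma det_gramCholeskyMatrix_ne_zero {f : ℕ → E} (hf : LinearIndependent ℝ f) (n : ℕ) :
    (gramCholeskyMatrix f n).det ≠ 0 := by
  have hgram : (gram ℝ fun i : Fin n ↦ f i).det ≠ 0 :=
    det_gram_ne_zero_iff_linearIndependent.2 (hf.comp _ Fin.val_injective)
  rw [← gramCholeskyMatrix_mul_transpose hf, det_mul] at hgram
  exact left_ne_zero_of_mul hgram

lemma sum_range_gramCholesky_mul (f : ℕ → E) (ξ : ℕ → ℝ) {n : ℕ} (i : Fin n) :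
    ∑ j ∈ Finset.range (i + 1), gramCholesky f i j * ξ j =
      (gramCholeskyMatrix f n *ᵥ fun j ↦ ξ j) i := by
  simp only [mulVec, dotProduct, gramCholeskyMatrix, of_apply]
  rw [Fin.sum_univ_eq_sum_range (fun j ↦ gramCholesky f i j * ξ j)]
  refine Finset.sum_subset (Finset.range_subset_range.2 i.2) fun j _ hj ↦ ?_
  rw [gramCholesky_eq_zero_of_lt f (by simpa using hj), zero_mul]

end GramCholesky

/-- The truncation `X^ℕ → X^n` of a sequence to its first `n` terms. -/
def firstTerms {X : Type*} (n : ℕ) (x : ℕ → X) : Fin n → X := fun i ↦ x i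

@[fun_prop]
lemma continuous_firstTerms {X : Type*} [TopologicalSpace X] (n : ℕ) :
    Continuous (firstTerms n : (ℕ → X) → Fin n → X) := by
  unfold firstTerms
  fun_prop

@[fun_prop]
lemma measurable_firstTerms {X : Type*} [MeasurableSpace X] (n : ℕ) :
    Measurable (firstTerms n : (ℕ → X) → Fin n → X) := by
  unfold firstTerms
  fun_prop

section GaussianSequence

variable {E : Type*} [NormedAddCommGroup E] [InnerProductSpace ℝ E]

/-- The law of a centered Gaussian sequence with covariance `⟪f i, f j⟫`, for linearly independent
`f`: the image of i.i.d. standard normal variables under the infinite lower triangular matrix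
`gramCholesky f`. -/
def gaussianSequence (f : ℕ → E) : Measure (ℕ → ℝ) :=
  (Measure.infinitePi fun _ ↦ gaussianReal 0 1).map
    fun ξ i ↦ ∑ j ∈ Finset.range (i + 1), gramCholesky f i j * ξ j

instance (f : ℕ → E) : IsFiniteMeasure (gaussianSequence f) := by
  unfold gaussianSequence
  infer_instance

lemma map_firstTerms_gaussianSequence {f : ℕ → E} (hf : LinearIndependent ℝ f) (n : ℕ) :
    (gaussianSequence f).map (firstTerms n) = gauss n (gram ℝ fun i : Fin n ↦ f i) := by
  have hiid : (Measure.infinitePi fun _ : ℕ ↦ gaussianReal 0 1).map (firstTerms n) =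
      Measure.pi fun _ : Fin n ↦ gaussianReal 0 1 :=
    (Measure.map_infinitePi_infinitePi_of_inj Fin.val_injective).trans
      (Measure.infinitePi_eq_pi _)
  rw [← gramCholeskyMatrix_mul_transpose hf,
    ← map_toLin'_pi_gaussianReal_zero_one (det_gramCholeskyMatrix_ne_zero hf n), ← hiid,
    gaussianSequence, Measure.map_map (by fun_prop) (by fun_prop),
    Measure.map_map (LinearMap.continuous_of_finiteDimensional _).measurable (by fun_prop)]
  congr 1
  ext ξ i
  exact sum_range_gramCholesky_mul f ξ i

end GaussianSequence

section BrownianCovariance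

/-- The indicator function of `(0, s]` as an element of `L²(ℝ)`. -/
def indicatorIocL2 (s : ℝ) : Lp ℝ 2 (volume : Measure ℝ) :=
  indicatorConstLp 2 (measurableSet_Ioc (a := 0) (b := s)) measure_Ioc_lt_top.ne 1

lemma inner_indicatorIocL2 {s r : ℝ} (hs : 0 ≤ s) (hr : 0 ≤ r) :
    inner ℝ (indicatorIocL2 s) (indicatorIocL2 r) = min s r := by
  rw [indicatorIocL2, indicatorIocL2,
    L2.real_inner_indicatorConstLp_one_indicatorConstLp_one _ _ measure_Ioc_lt_top.ne
      measure_Ioc_lt_top.ne,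
    Ioc_inter_Ioc, max_self, Real.volume_real_Ioc_of_le (le_min hs hr), sub_zero]

/-- The second difference `2 · 1_(0,s] - 1_(0,s-ε] - 1_(0,s+ε]`. Its inner products with the
`1_(0,r]` are the values at `r` of the tent function of height `ε` supported on
`[s - ε, s + ε]`. -/
def tentL2 (s ε : ℝ) : Lp ℝ 2 (volume : Measure ℝ) :=
  (2 : ℝ) • indicatorIocL2 s - indicatorIocL2 (s - ε) - indicatorIocL2 (s + ε)

lemma inner_tentL2_indicatorIocL2 {s ε r : ℝ} (hε : 0 ≤ ε) (hεs : ε ≤ s) (hr : 0 ≤ r) :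
    inner ℝ (tentL2 s ε) (indicatorIocL2 r) = max (ε - |r - s|) 0 := by
  rw [tentL2, inner_sub_left, inner_sub_left, real_inner_smul_left,
    inner_indicatorIocL2 (hε.trans hεs) hr, inner_indicatorIocL2 (by linarith) hr,
    inner_indicatorIocL2 (by linarith) hr]
  grind

lemma linearIndependent_indicatorIocL2 {ι : Type*} {t : ι → ℝ} (ht : Function.Injective t)
    (ht_pos : ∀ i, 0 < t i) : LinearIndependent ℝ fun i ↦ indicatorIocL2 (t i) := by
  rw [linearIndependent_iff']
  intro s g hg k hk
  have hsmall : ∀ᶠ ε in 𝓝[>] (0 : ℝ), 0 < ε ∧ ε ≤ t k ∧ ∀ j ∈ s, j ≠ k → ε ≤ |t j - t k| := by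
    have hle {c : ℝ} (hc : 0 < c) : ∀ᶠ ε in 𝓝[>] (0 : ℝ), ε ≤ c :=
      eventually_nhdsWithin_of_eventually_nhds (eventually_le_nhds hc)
    refine eventually_mem_nhdsWithin.and ((hle (ht_pos k)).and ?_)
    rw [Filter.eventually_all_finset]
    intro j _
    rw [Filter.eventually_imp_distrib_left]
    exact fun hjk ↦ hle (abs_pos.2 (sub_ne_zero.2 (ht.ne hjk)))
  obtain ⟨ε, hε, hεk, hεj⟩ := hsmall.exists
  have htent (j : ι) : inner ℝ (tentL2 (t k) ε) (indicatorIocL2 (t j)) = max (ε - |t j - t k|) 0 :=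
    inner_tentL2_indicatorIocL2 hε.le hεk (ht_pos j).le
  have hcoeff : g k * ε = 0 := by
    calc g k * ε = ∑ j ∈ s, g j * max (ε - |t j - t k|) 0 := by
          rw [Finset.sum_eq_single_of_mem k hk fun j hj hjk ↦ by
            rw [max_eq_right (sub_nonpos.2 (hεj j hj hjk)), mul_zero]]
          simp [hε.le]
      _ = inner ℝ (tentL2 (t k) ε) (∑ j ∈ s, g j • indicatorIocL2 (t j)) := by
          simp only [inner_sum, real_inner_smul_right, htent]
      _ = 0 := by rw [hg, inner_zero_right]
  exact (mul_eq_zero.1 hcoeff).resolve_right hε.ne'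

lemma gram_indicatorIocL2_eq_covM {t : ℕ → ℝ} (ht : ∀ k, 0 ≤ t k) (n : ℕ) :
    gram ℝ (fun i : Fin n ↦ indicatorIocL2 (t i)) = covM t n := by
  ext i j
  exact inner_indicatorIocL2 (ht i) (ht j)

end BrownianCovariance

section CylinderApproximation

variable {X : Type*} [TopologicalSpace X]

lemma iInter_preimage_image_firstTerms_of_isClosed {K : Set (ℕ → X)} (hK : IsClosed K) :
    ⋂ n, firstTerms (n + 1) ⁻¹' (firstTerms (n + 1) '' K) = K := by
  refine Subset.antisymm (fun y hy ↦ ?_) (subset_iInter fun n ↦ subset_preimage_image _ _)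
  choose z hzK hzy using mem_iInter.1 hy
  have hz : Tendsto z atTop (𝓝 y) := by
    refine tendsto_pi_nhds.2 fun i ↦ tendsto_const_nhds.congr' ?_
    filter_upwards [eventually_ge_atTop i] with n hn
    exact (congrFun (hzy n) ⟨i, Nat.lt_succ_of_le hn⟩).symm
  exact hK.mem_of_tendsto hz (Eventually.of_forall hzK)

lemma measure_eq_iInf_map_firstTerms_of_isCompact [T2Space X] [SecondCountableTopology X]
    [MeasurableSpace X] [BorelSpace X] (P : Measure (ℕ → X)) [IsFiniteMeasure P]
    {K : Set (ℕ → X)} (hK : IsCompact K) :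
    P K = ⨅ n, P.map (firstTerms (n + 1)) (firstTerms (n + 1) '' K) := by
  have himage (n : ℕ) : MeasurableSet (firstTerms n '' K) :=
    (hK.image (continuous_firstTerms n)).measurableSet
  have hanti : Antitone fun n ↦ firstTerms (n + 1) ⁻¹' (firstTerms (n + 1) '' K) := by
    rintro m n hmn y ⟨z, hz, hzy⟩
    exact ⟨z, hz, funext fun i ↦ congrFun hzy ⟨i, by omega⟩⟩
  calc P K = P (⋂ n, firstTerms (n + 1) ⁻¹' (firstTerms (n + 1) '' K)) := by
        rw [iInter_preimage_image_firstTerms_of_isClosed hK.isClosed]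
    _ = ⨅ n, P (firstTerms (n + 1) ⁻¹' (firstTerms (n + 1) '' K)) :=
        hanti.measure_iInter
          (fun n ↦ (measurable_firstTerms _ (himage (n + 1))).nullMeasurableSet)
          ⟨0, measure_ne_top _ _⟩
    _ = ⨅ n, P.map (firstTerms (n + 1)) (firstTerms (n + 1) '' K) :=
        iInf_congr fun n ↦ (Measure.map_apply (measurable_firstTerms _) (himage _)).symm

end CylinderApproximation

section WienerMeasure

instance : PolishSpace Cz :=
  IsClosed.polishSpace (isClosed_eq (continuous_eval_const _) continuous_const :
    IsClosed {f : C(Icc (0 : ℝ) 1, ℝ) | f ⟨0, ⟨le_refl 0, zero_le_one⟩⟩ = 0})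

variable (t : ℕ → ℝ) (ht : ∀ k, t k ∈ Ioc (0 : ℝ) 1)

/-- The sampling map `x ↦ (x(t_1), x(t_2), …)`, of which `proj t ht n` is the truncation to the
first `n` terms. -/
def sampling (x : Cz) : ℕ → ℝ :=
  fun k ↦ (x : C(Icc (0 : ℝ) 1, ℝ)) ⟨t k, Ioc_subset_Icc_self (ht k)⟩

/-- Wiener measure, as the pullback along the sampling map of the Gaussian sequence with covariance
`min (t i) (t j)`. -/
def wienerMeasure : Measure Cz :=
  (gaussianSequence fun k ↦ indicatorIocL2 (t k)).comap (sampling t ht)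

instance : IsFiniteMeasure (wienerMeasure t ht) := by
  unfold wienerMeasure
  infer_instance

lemma continuous_sampling : Continuous (sampling t ht) :=
  continuous_pi fun _ ↦ (continuous_eval_const _).comp continuous_subtype_val

variable {t}

lemma injective_sampling (htdense : Icc (0 : ℝ) 1 ⊆ closure (range t)) :
    Function.Injective (sampling t ht) := by
  have hdense : DenseRange fun k ↦ (⟨t k, Ioc_subset_Icc_self (ht k)⟩ : Icc (0 : ℝ) 1) := by
    rw [DenseRange, Subtype.dense_iff, ← range_comp]
    exact htdense
  exact fun x y hxy ↦ Subtype.ext <| DFunLike.coe_injective <|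
    hdense.equalizer (map_continuous _) (map_continuous _) hxy

lemma measurableEmbedding_sampling (htdense : Icc (0 : ℝ) 1 ⊆ closure (range t)) :
    MeasurableEmbedding (sampling t ht) :=
  (continuous_sampling t ht).measurableEmbedding (injective_sampling ht htdense)

lemma phi_eq_wienerMeasure_of_isCompact (htinj : Function.Injective t)
    (htdense : Icc (0 : ℝ) 1 ⊆ closure (range t)) {K : Set Cz} (hK : IsCompact K) :
    phi t ht K = wienerMeasure t ht K := by
  have hmarginal (n : ℕ) : (gaussianSequence fun k ↦ indicatorIocL2 (t k)).map (firstTerms n) =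
      gauss n (covM t n) := by
    rw [map_firstTerms_gaussianSequence
        (linearIndependent_indicatorIocL2 htinj fun k ↦ (ht k).1),
      gram_indicatorIocL2_eq_covM fun k ↦ (ht k).1.le]
  rw [wienerMeasure, (measurableEmbedding_sampling ht htdense).comap_apply,
    measure_eq_iInf_map_firstTerms_of_isCompact _ (hK.image (continuous_sampling t ht)), phi]
  refine iInf_congr fun n ↦ ?_
  rw [hmarginal, image_image]
  rfl

lemma mu_eq_wienerMeasure (htinj : Function.Injective t)
    (htdense : Icc (0 : ℝ) 1 ⊆ closure (range t)) {A : Set Cz} (hA : MeasurableSet A) :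
    mu t ht A = wienerMeasure t ht A := by
  rw [hA.measure_eq_iSup_isCompact (wienerMeasure t ht)]
  exact iSup_congr fun K ↦ iSup_congr fun _ ↦ iSup_congr fun hK ↦
    phi_eq_wienerMeasure_of_isCompact ht htinj htdense hK

end WienerMeasure

/-- if `A ⊆ B` are Borel, then `μ(B \ A) = μ(B) − μ(A)`. -/
theorem stmt9 (t : ℕ → ℝ) (ht : ∀ k, t k ∈ Set.Ioc (0:ℝ) 1)
    (htinj : Function.Injective t)
    (htdense : Set.Icc (0:ℝ) 1 ⊆ closure (Set.range t))
    (A B : Set Cz) (hA : MeasurableSet A) (hB : MeasurableSet B)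
    (hAB : A ⊆ B) :
    mu t ht (B \ A) = mu t ht B - mu t ht A := by
  rw [mu_eq_wienerMeasure ht htinj htdense (hB.diff hA), mu_eq_wienerMeasure ht htinj htdense hB,
    mu_eq_wienerMeasure ht htinj htdense hA,
    measure_sdiff hAB hA.nullMeasurableSet (measure_ne_top _ _)]

end
end
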